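/- Let x_0,…,x_N ∈ ℝ^d, let X : [0,N] → ℝ^d be the piecewise linear interpolation of x, let 0 ≤ m ≤ N be an integer and (j_1,…,j_n) a word with n ≥ 1 and letters in {1,…,d}. Then the signature of X equals the Hoffman-type composition sum of iterated sums: ⟨S_{0,m}(X),(j_1,…,j_n)⟩ = Σ_{I composition of n, I = (I_1,…,I_k)} (1/I!)·Σ_{0 ≤ l_1 < l_2 < ⋯ < l_k < m} ∏_{r=1}^{k} ∏_{s ∈ B_r} Δx_{l_r}^{j_s}, where B_1,…,B_k are the consecutive blocks of {1,…,n} determined by I. -/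

import Mathlib

open scoped Nat
open MeasureTheory

/-- The open simplex `{(t_1,…,t_n) : s < t_1 < ⋯ < t_n < t}` in `ℝ^n`. -/
def simplexSet (n : ℕ) (s t : ℝ) : Set (Fin n → ℝ) :=
  {u | (∀ i, s < u i ∧ u i < t) ∧ ∀ i j : Fin n, i < j → u i < u j}

/-- Signature coefficient `⟨S_{s,t}(X), (w 0, …, w (n-1))⟩` of the path `X` over `[s,t]`,
for the word given by the first `n` letters of `w`; equal to `1` for the empty word. -/
noncomputable def sigCoeff {d : ℕ} (X : ℝ → Fin d → ℝ) (s t : ℝ) (n : ℕ) (w : ℕ → Fin d) : ℝ :=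
  if n = 0 then 1 else
    ∫ u in simplexSet n s t, ∏ k : Fin n, deriv (fun r => X r (w k)) (u k)

theorem measurableSet_simplexSet (n : ℕ) (s t : ℝ) : MeasurableSet (simplexSet n s t) := by
  have h : simplexSet n s t = {u | (∀ i, s < u i) ∧ (∀ i, u i < t) ∧ ∀ i j, i < j → u i < u j} := by
    simp only [simplexSet, forall_and, and_assoc]
  rw [h]
  simp only [Set.ofPred_and, Set.ofPred_forall]
  measurability

theorem snoc_mem_simplexSet {n : ℕ} {s t r : ℝ} {v : Fin n → ℝ} :
    Fin.snoc (α := fun _ => ℝ) v r ∈ simplexSet (n + 1) s t ↔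
      r ∈ Set.Ioo s t ∧ v ∈ simplexSet n s r := by
  simp only [simplexSet, Set.mem_ofPred_eq, Fin.forall_fin_succ', Fin.snoc_castSucc, Fin.snoc_last,
    Fin.castSucc_lt_castSucc_iff, Fin.castSucc_lt_last, Set.mem_Ioo, lt_irrefl, forall_true_left,
    false_imp_iff, and_true]
  constructor
  · rintro ⟨⟨h1, h2⟩, h3, -⟩
    exact ⟨h2, fun i => ⟨(h1 i).1, (h3 i).2⟩, fun i => (h3 i).1⟩
  · rintro ⟨h1, h2, h3⟩
    exact ⟨⟨fun i => ⟨(h2 i).1, (h2 i).2.trans h1.2⟩, h1⟩, fun i => ⟨h3 i, (h2 i).2⟩,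
      fun i h => absurd h (Fin.le_last _).not_gt⟩

/-- The iterated integral of `f 0, …, f (n - 1)` over the simplex `s < u_0 < ⋯ < u_{n-1} < t`. -/
noncomputable def iteratedIntegral (f : ℕ → ℝ → ℝ) (s t : ℝ) (n : ℕ) : ℝ :=
  ∫ u in simplexSet n s t, ∏ k : Fin n, f k (u k)

theorem iteratedIntegral_zero (f : ℕ → ℝ → ℝ) (s t : ℝ) : iteratedIntegral f s t 0 = 1 := by
  have h : simplexSet 0 s t = Set.univ := by simp [simplexSet]
  simp [iteratedIntegral, h, measureReal_def, volume_pi]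

theorem iteratedIntegral_self (f : ℕ → ℝ → ℝ) (s : ℝ) {n : ℕ} (hn : 0 < n) :
    iteratedIntegral f s s n = 0 := by
  have h : simplexSet n s s = ∅ := Set.eq_empty_of_forall_notMem fun u hu =>
    ((hu.1 ⟨0, hn⟩).1.trans (hu.1 ⟨0, hn⟩).2).false
  simp [iteratedIntegral, h]

theorem integrableOn_and_iteratedIntegral_succ {f : ℕ → ℝ → ℝ}
    (hf : ∀ k, Integrable (f k)) (s t : ℝ) (n : ℕ) :
    IntegrableOn (fun r => f n r * iteratedIntegral f s r n) (Set.Ioo s t) ∧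
      iteratedIntegral f s t (n + 1) =
        ∫ r in Set.Ioo s t, f n r * iteratedIntegral f s r n := by
  set F : (Fin (n + 1) → ℝ) → ℝ :=
    (simplexSet (n + 1) s t).indicator fun u => ∏ k : Fin (n + 1), f k (u k)
  have hF : Integrable F :=
    (Integrable.fintype_prod fun k : Fin (n + 1) => hf k).indicator
      (measurableSet_simplexSet _ _ _)
  have he := (volume_preserving_piFinSuccAbove (fun _ : Fin (n + 1) => ℝ) (Fin.last n)).symm
  have hFe (p : ℝ × (Fin n → ℝ)) :
      F ((MeasurableEquiv.piFinSuccAbove (fun _ : Fin (n + 1) => ℝ) (Fin.last n)).symm p) =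
        (Set.Ioo s t).indicator (fun r => f n r *
          (simplexSet n s r).indicator (fun v => ∏ k : Fin n, f k (v k)) p.2) p.1 := by
    have hsnoc : (MeasurableEquiv.piFinSuccAbove (fun _ : Fin (n + 1) => ℝ) (Fin.last n)).symm p =
        Fin.snoc (α := fun _ => ℝ) p.2 p.1 := Fin.insertNth_last' _ _
    classical
    rw [hsnoc]
    simp only [F, Set.indicator_apply, snoc_mem_simplexSet, Fin.prod_univ_castSucc,
      Fin.snoc_castSucc, Fin.snoc_last, Fin.val_castSucc, Fin.val_last]
    split_ifs <;> simp_all [mul_comm (f n p.1)]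
  have hint := (he.integrable_comp_emb (MeasurableEquiv.measurableEmbedding _)).2 hF
  have hinner (r : ℝ) : ∫ v, F ((MeasurableEquiv.piFinSuccAbove (fun _ : Fin (n + 1) => ℝ)
      (Fin.last n)).symm (r, v)) =
      (Set.Ioo s t).indicator (fun r => f n r * iteratedIntegral f s r n) r := by
    simp only [hFe]
    by_cases hr : r ∈ Set.Ioo s t
    · simp only [Set.indicator_of_mem hr, iteratedIntegral]
      rw [integral_const_mul, integral_indicator (measurableSet_simplexSet _ _ _)]
    · simp [Set.indicator_of_notMem hr]
  constructor
  · rw [← integrable_indicator_iff measurableSet_Ioo]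
    simpa only [Function.comp_apply, hinner] using hint.integral_prod_left
  · rw [← integral_indicator measurableSet_Ioo, iteratedIntegral,
      ← integral_indicator (measurableSet_simplexSet _ _ _)]
    rw [← he.integral_comp (MeasurableEquiv.measurableEmbedding _)]
    exact (integral_prod _ hint).trans (integral_congr_ae (.of_forall hinner))

theorem intervalIntegrable_mul_iteratedIntegral {f : ℕ → ℝ → ℝ} (hf : ∀ k, Integrable (f k))
    {s t : ℝ} (hst : s ≤ t) (n : ℕ) :
    IntervalIntegrable (fun r => f n r * iteratedIntegral f s r n) volume s t :=
  (intervalIntegrable_iff_integrableOn_Ioo_of_le hst).2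
    (integrableOn_and_iteratedIntegral_succ hf s t n).1

theorem iteratedIntegral_succ {f : ℕ → ℝ → ℝ} (hf : ∀ k, Integrable (f k)) {s t : ℝ}
    (hst : s ≤ t) (n : ℕ) :
    iteratedIntegral f s t (n + 1) = ∫ r in s..t, f n r * iteratedIntegral f s r n := by
  rw [intervalIntegral.integral_of_le hst, integral_Ioc_eq_integral_Ioo]
  exact (integrableOn_and_iteratedIntegral_succ hf s t n).2

/-- Chen's identity across an interval `(c, e)` on which every `f k` is constant. -/
theorem iteratedIntegral_eq_sum_of_const {f : ℕ → ℝ → ℝ} (hf : ∀ k, Integrable (f k))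
    {s c e : ℝ} (hsc : s ≤ c) {b : ℕ → ℝ} (hb : ∀ k, ∀ r ∈ Set.Ioo c e, f k r = b k) (n : ℕ) :
    ∀ t ∈ Set.Icc c e, iteratedIntegral f s t n = ∑ p ∈ Finset.range (n + 1),
      iteratedIntegral f s c p *
        ((∏ q ∈ Finset.range (n - p), b (p + q)) * (t - c) ^ (n - p) / (n - p)!) := by
  induction n with
  | zero => simp [iteratedIntegral_zero]
  | succ n ih =>
    intro t ht
    have hii := intervalIntegrable_mul_iteratedIntegral hf (hsc.trans ht.1) n
    have hmem : c ∈ Set.uIcc s t := by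
      rw [Set.uIcc_of_le (hsc.trans ht.1)]
      exact ⟨hsc, ht.1⟩
    rw [iteratedIntegral_succ hf (hsc.trans ht.1),
      ← intervalIntegral.integral_add_adjacent_intervals
      (hii.mono_set (Set.uIcc_subset_uIcc_left hmem))
      (hii.mono_set (Set.uIcc_subset_uIcc_right hmem)), ← iteratedIntegral_succ hf hsc,
      Finset.sum_range_succ _ (n + 1), add_comm]
    congr 1
    · rw [intervalIntegral.integral_congr_Ioo_of_le ht.1 (g := fun r =>
        ∑ p ∈ Finset.range (n + 1), iteratedIntegral f s c p *
          ((∏ q ∈ Finset.range (n + 1 - p), b (p + q)) / (n - p)!) * (r - c) ^ (n - p))]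
      · rw [intervalIntegral.integral_finsetSum fun p _ =>
          Continuous.intervalIntegrable (by fun_prop) _ _]
        refine Finset.sum_congr rfl fun p hp => ?_
        have hp : p ≤ n := Finset.mem_range_succ_iff.1 hp
        rw [intervalIntegral.integral_const_mul,
          intervalIntegral.integral_comp_sub_right (fun r => r ^ (n - p)), integral_pow,
          Nat.sub_add_comm hp, Nat.factorial_succ]
        push_cast
        field_simp
        simp
      · intro r hr
        have hr' : r ∈ Set.Ioo c e := ⟨hr.1, hr.2.trans_le ht.2⟩
        simp only [hb n r hr', ih r ⟨hr'.1.le, hr'.2.le⟩, Finset.mul_sum]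
        refine Finset.sum_congr rfl fun p hp => ?_
        have hp : p ≤ n := Finset.mem_range_succ_iff.1 hp
        rw [Nat.sub_add_comm hp, Finset.prod_range_succ, Nat.add_sub_of_le hp]
        ring
    · simp

/-- The iterated sum `∑_{0 ≤ l_0 < ⋯ < l_{k-1} < m} ∏_r g r l_r`. -/
noncomputable def iteratedSum (m k : ℕ) (g : ℕ → ℕ → ℝ) : ℝ :=
  ∑ l ∈ Finset.univ.filter (fun l : Fin k → Fin m => StrictMono l), ∏ r : Fin k, g r (l r)

theorem iteratedSum_zero_right (m : ℕ) (g : ℕ → ℕ → ℝ) : iteratedSum m 0 g = 1 := by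
  simp [iteratedSum, Subsingleton.strictMono]

theorem iteratedSum_zero_succ (k : ℕ) (g : ℕ → ℕ → ℝ) : iteratedSum 0 (k + 1) g = 0 := by
  simp [iteratedSum]

theorem iteratedSum_congr {m k : ℕ} {g h : ℕ → ℕ → ℝ} (hgh : ∀ r < k, ∀ l, g r l = h r l) :
    iteratedSum m k g = iteratedSum m k h :=
  Finset.sum_congr rfl fun _ _ => Finset.prod_congr rfl fun r _ => hgh r r.2 _

/-- The iterated sum up to `m + 1` splits according to whether the last index equals `m`. -/
theorem iteratedSum_succ_succ (m k : ℕ) (g : ℕ → ℕ → ℝ) :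
    iteratedSum (m + 1) (k + 1) g = iteratedSum m (k + 1) g + iteratedSum m k g * g k m := by
  unfold iteratedSum
  rw [← Finset.sum_filter_not_add_sum_filter _
    (fun l : Fin (k + 1) → Fin (m + 1) => l (Fin.last k) = Fin.last m), Finset.sum_mul]
  congr 1
  · symm
    refine Finset.sum_nbij (fun l r => (l r).castSucc) ?_ ?_ ?_ ?_
    · intro l hl
      simp only [Finset.mem_filter, Finset.mem_univ, true_and] at hl ⊢
      exact ⟨fun i j hij => Fin.castSucc_lt_castSucc_iff.2 (hl hij), Fin.castSucc_ne_last _⟩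
    · intro l _ l' _ h
      funext r
      exact Fin.castSucc_injective _ (congrFun h r)
    · intro l hl
      simp only [Finset.coe_filter, Finset.mem_filter, Finset.mem_univ, true_and,
        Set.mem_ofPred_eq] at hl
      have hlast (r : Fin (k + 1)) : l r ≠ Fin.last m := fun h =>
        hl.2 (le_antisymm (Fin.le_last _) (h ▸ hl.1.monotone (Fin.le_last r)))
      refine ⟨fun r => (l r).castPred (hlast r), ?_, funext fun r => Fin.castSucc_castPred _ _⟩
      simp only [Finset.coe_filter, Finset.mem_univ, true_and, Set.mem_ofPred_eq]
      exact fun i j hij => Fin.castPred_lt_castPred_iff.2 (hl.1 hij)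
    · simp
  · symm
    refine Finset.sum_nbij
      (fun l => Fin.snoc (α := fun _ => Fin (m + 1)) (fun r => (l r).castSucc) (Fin.last m))
      ?_ ?_ ?_ ?_
    · intro l hl
      simp only [Finset.mem_filter, Finset.mem_univ, true_and] at hl ⊢
      refine ⟨fun i j hij => ?_, by simp⟩
      induction j using Fin.lastCases with
      | last =>
        obtain ⟨i, rfl⟩ := Fin.exists_castSucc_eq.2 hij.ne
        simp
      | cast j =>
        obtain ⟨i, rfl⟩ := Fin.exists_castSucc_eq.2 (hij.trans (Fin.castSucc_lt_last j)).ne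
        simpa using hl (by simpa using hij)
    · intro l _ l' _ h
      funext r
      simpa using congrFun h r.castSucc
    · intro l hl
      simp only [Finset.coe_filter, Finset.mem_filter, Finset.mem_univ, true_and,
        Set.mem_ofPred_eq] at hl
      have hlast (r : Fin k) : l r.castSucc ≠ Fin.last m :=
        hl.2 ▸ (hl.1 (Fin.castSucc_lt_last r)).ne
      refine ⟨fun r => (l r.castSucc).castPred (hlast r), ?_, ?_⟩
      · simp only [Finset.coe_filter, Finset.mem_univ, true_and, Set.mem_ofPred_eq]
        exact fun i j hij =>
          Fin.castPred_lt_castPred_iff.2 (hl.1 (Fin.castSucc_lt_castSucc_iff.2 hij))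
      · funext r
        induction r using Fin.lastCases <;> simp [hl.2]
    · intro l _
      simp [Fin.prod_univ_castSucc]

/-- The contribution of a list `L` of block sizes to the composition sum of the array `a`. -/
noncomputable def blockSum (a : ℕ → ℕ → ℝ) (m : ℕ) (L : List ℕ) : ℝ :=
  (1 / (L.map fun b => (b ! : ℝ)).prod) * iteratedSum m L.length
    fun r l => ∏ q ∈ Finset.range (L.getD r 0), a l ((L.take r).sum + q)

theorem blockSum_nil (a : ℕ → ℕ → ℝ) (m : ℕ) : blockSum a m [] = 1 := by
  simp [blockSum, iteratedSum_zero_right]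

theorem blockSum_zero_of_ne_nil (a : ℕ → ℕ → ℝ) {L : List ℕ} (hL : L ≠ []) :
    blockSum a 0 L = 0 := by
  obtain ⟨b, L, rfl⟩ := List.exists_cons_of_ne_nil hL
  simp [blockSum, iteratedSum_zero_succ]

theorem blockSum_succ_concat (a : ℕ → ℕ → ℝ) (m : ℕ) (L : List ℕ) (b : ℕ) :
    blockSum a (m + 1) (L ++ [b]) = blockSum a m (L ++ [b]) +
      blockSum a m L * ((∏ q ∈ Finset.range b, a m (L.sum + q)) / b !) := by
  unfold blockSum
  rw [List.length_append, List.length_singleton, iteratedSum_succ_succ, mul_add]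
  congr 1
  rw [iteratedSum_congr (k := L.length) (h := fun r l =>
    ∏ q ∈ Finset.range (L.getD r 0), a l ((L.take r).sum + q))]
  · simp
    ring
  · intro r hr l
    rw [List.getD_append _ _ _ _ hr, List.take_append_of_le_length hr.le]

/-- The composition sum of the array `a` over compositions of `n`. -/
noncomputable def compositionSum (a : ℕ → ℕ → ℝ) (m n : ℕ) : ℝ :=
  ∑ c : Composition n, blockSum a m c.blocks

/-- A composition of a positive integer is a composition followed by a last block. -/
theorem sum_composition_eq_sum_concat {n : ℕ} (hn : 0 < n) (Φ : List ℕ → ℝ) :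
    ∑ c : Composition n, Φ c.blocks =
      ∑ p : Fin n, ∑ c : Composition p, Φ (c.blocks ++ [n - p]) := by
  rw [← Fintype.sum_sigma (fun pc : (p : Fin n) × Composition p => Φ (pc.2.blocks ++ [n - pc.1]))]
  symm
  refine Finset.sum_bij (fun pc _ => ⟨pc.2.blocks ++ [n - pc.1], ?_, ?_⟩) ?_ ?_ ?_ ?_
  · intro i hi
    rcases List.mem_append.1 hi with h | h
    · exact pc.2.blocks_pos h
    · rw [List.mem_singleton.1 h]
      exact Nat.sub_pos_of_lt pc.1.2
  · simp [pc.2.blocks_sum, Nat.add_sub_of_le pc.1.2.le]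
  · simp
  · rintro ⟨p, c⟩ _ ⟨p', c'⟩ _ h
    have hb : c.blocks = c'.blocks :=
      (List.append_inj' (congrArg Composition.blocks h) rfl).1
    obtain rfl : p = p' := Fin.ext (by rw [← c.blocks_sum, hb, c'.blocks_sum])
    rw [Composition.ext hb]
  · intro c _
    have hne : c.blocks ≠ [] := by simp [hn.ne']
    have hsplit := List.dropLast_append_getLast hne
    have hpos : 0 < c.blocks.getLast hne := c.blocks_pos (List.getLast_mem hne)
    have hsum : c.blocks.dropLast.sum + c.blocks.getLast hne = n := by
      conv_rhs => rw [← c.blocks_sum, ← hsplit]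
      simp
    refine ⟨⟨⟨c.blocks.dropLast.sum, by omega⟩, ⟨c.blocks.dropLast, fun h =>
      c.blocks_pos (List.mem_of_mem_dropLast h), rfl⟩⟩, Finset.mem_univ _, ?_⟩
    apply Composition.ext
    conv_rhs => rw [← hsplit]
    simp only [List.append_cancel_left_eq, List.cons.injEq, and_true]
    omega
  · simp

theorem compositionSum_zero_right (a : ℕ → ℕ → ℝ) (m : ℕ) : compositionSum a m 0 = 1 := by
  have h (c : Composition 0) : c.blocks = [] := c.blocks_eq_nil.2 rfl
  simp [compositionSum, h, blockSum_nil, composition_card]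

theorem compositionSum_zero_left (a : ℕ → ℕ → ℝ) {n : ℕ} (hn : 0 < n) :
    compositionSum a 0 n = 0 :=
  Finset.sum_eq_zero fun c _ => blockSum_zero_of_ne_nil a (by simp [hn.ne'])

theorem compositionSum_succ (a : ℕ → ℕ → ℝ) (m n : ℕ) :
    compositionSum a (m + 1) n = ∑ p ∈ Finset.range (n + 1),
      compositionSum a m p * ((∏ q ∈ Finset.range (n - p), a m (p + q)) / (n - p)!) := by
  rw [Finset.sum_range_succ]
  rcases n.eq_zero_or_pos with rfl | hn
  · simp [compositionSum_zero_right]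
  · rw [Finset.sum_range]
    unfold compositionSum
    rw [sum_composition_eq_sum_concat hn, sum_composition_eq_sum_concat hn]
    simp only [blockSum_succ_concat, Finset.sum_add_distrib, Composition.blocks_sum,
      Finset.sum_mul]
    simp [add_comm]

theorem compositionSum_eq (a : ℕ → ℕ → ℝ) (m n : ℕ) :
    compositionSum a m n = ∑ c : Composition n,
      (1 / ∏ r : Fin c.length, ((c.blocksFun r)! : ℝ)) *
        ∑ l ∈ Finset.univ.filter (fun l : Fin c.length → Fin m => StrictMono l),
          ∏ r : Fin c.length, ∏ q : Fin (c.blocksFun r), a (l r) (c.sizeUpTo r + q) := by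
  refine Finset.sum_congr rfl fun c _ => ?_
  unfold blockSum iteratedSum
  congr 1
  · conv_lhs => rw [← c.ofFn_blocksFun, List.map_ofFn, List.prod_ofFn]
    rfl
  · refine Finset.sum_congr rfl fun l _ => Finset.prod_congr rfl fun r _ => ?_
    have hr : c.blocks.getD r 0 = c.blocksFun r := List.getD_eq_getElem _ _ r.2
    beta_reduce
    rw [hr, Finset.prod_range]
    rfl

theorem iteratedIntegral_eq_compositionSum {f : ℕ → ℝ → ℝ} (hf : ∀ k, Integrable (f k))
    {a : ℕ → ℕ → ℝ} {N : ℕ}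
    (ha : ∀ l < N, ∀ k, ∀ r ∈ Set.Ioo (l : ℝ) (l + 1), f k r = a l k) {m : ℕ} (hm : m ≤ N)
    (n : ℕ) : iteratedIntegral f 0 m n = compositionSum a m n := by
  induction m generalizing n with
  | zero =>
    rcases n.eq_zero_or_pos with rfl | hn
    · rw [iteratedIntegral_zero, compositionSum_zero_right]
    · rw [Nat.cast_zero, iteratedIntegral_self f 0 hn, compositionSum_zero_left a hn]
  | succ m ih =>
    rw [Nat.cast_succ, compositionSum_succ, iteratedIntegral_eq_sum_of_const hf m.cast_nonneg
      (ha m hm) n _ ⟨by linarith, le_rfl⟩]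
    simp [ih (Nat.le_of_succ_le hm)]

theorem deriv_eq_of_linear_interpolation {N : ℕ} {y : ℕ → ℝ} {Y : ℝ → ℝ}
    (hY : ∀ t ∈ Set.Icc (0 : ℝ) (N : ℝ),
      Y t = y ⌊t⌋.toNat + (t - ⌊t⌋) * (y (⌊t⌋.toNat + 1) - y ⌊t⌋.toNat))
    {l : ℕ} (hl : l < N) {r : ℝ} (hr : r ∈ Set.Ioo (l : ℝ) (l + 1)) :
    deriv Y r = y (l + 1) - y l := by
  have hlin : HasDerivAt (fun t => y l + (t - l) * (y (l + 1) - y l)) (y (l + 1) - y l) r := by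
    simpa using (((hasDerivAt_id r).sub_const (l : ℝ)).mul_const (y (l + 1) - y l)).const_add (y l)
  refine (hlin.congr_of_eventuallyEq ?_).deriv
  filter_upwards [Ioo_mem_nhds hr.1 hr.2] with t ht
  have hfloor : ⌊t⌋ = (l : ℤ) := Int.floor_eq_iff.2 ⟨by simpa using ht.1.le, by simpa using ht.2⟩
  have hlN : (l : ℝ) + 1 ≤ N := by exact_mod_cast hl
  rw [hY t ⟨l.cast_nonneg.trans ht.1.le, ht.2.le.trans hlN⟩, hfloor]
  simp

theorem integrableOn_Ioo_of_const {g : ℝ → ℝ} {N : ℕ} {b : ℕ → ℝ}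
    (hg : ∀ l < N, ∀ r ∈ Set.Ioo (l : ℝ) (l + 1), g r = b l) :
    IntegrableOn g (Set.Ioo 0 (N : ℝ)) := by
  rw [← intervalIntegrable_iff_integrableOn_Ioo_of_le N.cast_nonneg, ← Nat.cast_zero]
  refine IntervalIntegrable.trans_iterate (a := fun l : ℕ => (l : ℝ)) fun l hl => ?_
  refine (intervalIntegrable_const (c := b l)).congr_uIoo fun r hr => ?_
  rw [Nat.cast_succ, Set.uIoo_of_le (by linarith)] at hr
  exact (hg l hl r hr).symm

/-- The signature of the piecewise linear interpolation of a time series `x` equals the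
Hoffman-type composition sum of iterated sums of `x`. -/
theorem signature_of_linear_interpolation_eq_composition_sum {d : ℕ} (N : ℕ) (hN : 1 ≤ N)
    (x : ℕ → Fin d → ℝ) (X : ℝ → Fin d → ℝ)
    (hX : ∀ t ∈ Set.Icc (0:ℝ) (N:ℝ), ∀ j : Fin d,
      X t j = x ⌊t⌋.toNat j + (t - ⌊t⌋) * (x (⌊t⌋.toNat + 1) j - x ⌊t⌋.toNat j))
    (m : ℕ) (hm : m ≤ N) (n : ℕ) (hn : 1 ≤ n) (w : ℕ → Fin d) :
    sigCoeff X 0 (m : ℝ) n w =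
      ∑ c : Composition n,
        (1 / ∏ r : Fin c.length, ((c.blocksFun r)! : ℝ)) *
          ∑ l ∈ Finset.univ.filter (fun l : Fin c.length → Fin m => StrictMono l),
            ∏ r : Fin c.length, ∏ q : Fin (c.blocksFun r),
              (x ((l r : ℕ) + 1) (w (c.sizeUpTo r + q)) -
                x (l r : ℕ) (w (c.sizeUpTo r + q))) := by
  set f : ℕ → ℝ → ℝ := fun k => (Set.Ioo 0 (N : ℝ)).indicator (deriv fun r => X r (w k))
  have hderiv : ∀ l < N, ∀ k, ∀ r ∈ Set.Ioo (l : ℝ) (l + 1),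
      deriv (fun r => X r (w k)) r = x (l + 1) (w k) - x l (w k) := fun l hl k r hr =>
    deriv_eq_of_linear_interpolation (y := fun i => x i (w k)) (fun t ht => hX t ht (w k)) hl hr
  have hf (k : ℕ) : Integrable (f k) := (integrable_indicator_iff measurableSet_Ioo).2
    (integrableOn_Ioo_of_const fun l hl => hderiv l hl k)
  have ha : ∀ l < N, ∀ k, ∀ r ∈ Set.Ioo (l : ℝ) (l + 1),
      f k r = x (l + 1) (w k) - x l (w k) := by
    intro l hl k r hr
    have hlN : (l : ℝ) + 1 ≤ N := by exact_mod_cast hl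
    rw [← hderiv l hl k r hr]
    exact Set.indicator_of_mem (s := Set.Ioo 0 (N : ℝ))
      ⟨l.cast_nonneg.trans_lt hr.1, hr.2.trans_le hlN⟩ _
  have hsig : sigCoeff X 0 m n w = iteratedIntegral f 0 m n := by
    rw [sigCoeff, if_neg (Nat.one_le_iff_ne_zero.1 hn)]
    refine setIntegral_congr_fun (measurableSet_simplexSet _ _ _) fun u hu =>
      Finset.prod_congr rfl fun k _ => ?_
    have hmN : (m : ℝ) ≤ N := by exact_mod_cast hm
    exact (Set.indicator_of_mem (s := Set.Ioo 0 (N : ℝ))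
      ⟨(hu.1 k).1, (hu.1 k).2.trans_le hmN⟩ _).symm
  rw [hsig, iteratedIntegral_eq_compositionSum hf ha hm, compositionSum_eq]
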